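/- Let s ∈ (0,1) and β ∈ (−1,2s) with β−s ∉ ℤ and β−2s ∉ ℤ. Then the principal value lim_{ε→0⁺} ∫_{|y|>ε} (1 − ((1+y)_+)^β)/|y|^{1+2s} dy exists, and c_{1,s} · p.v.∫_ℝ (1 − ((1+y)_+)^β)/|y|^{1+2s} dy = (Γ(β+1)/Γ(β−2s+1)) · sin(π(β−s))/sin(π(β−2s)). Equivalently, the one-dimensional fractional Laplacian of x ↦ (x_+)^β at x = 1 equals this constant. -/

import Mathlib

open MeasureTheory Real Set Filter

noncomputable section

/-- The constant `c_{1,s} = s 4^s Γ(1/2+s)/(π^{1/2} Γ(1-s))`. -/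
def c1s (s : ℝ) : ℝ :=
  s * (4:ℝ) ^ s * Real.Gamma (1/2 + s) / (Real.pi ^ ((1:ℝ)/2) * Real.Gamma (1 - s))

/-- `(t)₊^β`, with the convention that it vanishes for `t ≤ 0` (for every `β`). -/
def powPlus (t β : ℝ) : ℝ := if 0 < t then t ^ β else 0

/-!
Substituting `v = -y` on `(-1, 0)` and `v = y / (1 + y)` on `(0, ∞)` folds the principal value onto
`(0, 1)`, where the two singularities cancel to second order. With `a = 2 * s` this gives
`1 / a + ∫₀¹ (1 - (1 - v) ^ β) (1 - (1 - v) ^ (a - 1 - β)) v ^ (-a - 1) dv`.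

Expanding the product, the Mellin transform `∫₀¹ ⋯ v ^ (z - 1) dv` is for `0 < re z` a sum of four
Beta functions. Divided by `Γ z` each of them is entire, so by the identity theorem the resulting
formula persists for `-2 < re z`, in particular at `z = -a`. Reflection and duplication for `Γ` then
yield the constant up to a common factor `cos (π * s)`, which vanishes at `s = 1 / 2`; there the
claim follows by continuity in `s`.
-/

section MellinContinuation

open Asymptotics Topology

variable {p β γ x : ℝ} {z : ℂ}

/-- The restriction of a real function to `(0, 1)`, extended by zero and regarded as complex-valued
so that Mathlib's `mellin` applies to it. -/
def unitCut (f : ℝ → ℝ) : ℝ → ℂ :=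
  indicator (Ioo 0 1) fun v ↦ (f v : ℂ)

/-- The product `(1 - (1 - v) ^ β) (1 - (1 - v) ^ γ)`, which vanishes to second order at `v = 0`. -/
def defectProd (β γ v : ℝ) : ℝ :=
  (1 - (1 - v) ^ β) * (1 - (1 - v) ^ γ)

/-- The entire function of `z` which continues `B(z, p + 1) / Γ(z)`. -/
def betaDivGamma (p z : ℂ) : ℂ :=
  Complex.Gamma (p + 1) * (Complex.Gamma (p + 1 + z))⁻¹

theorem cpow_smul_unitCut (f : ℝ → ℝ) (z : ℂ) :
    (fun v : ℝ ↦ (v : ℂ) ^ (z - 1) • unitCut f v) =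
      indicator (Ioo 0 1) fun v : ℝ ↦ (v : ℂ) ^ (z - 1) * f v := by
  ext v
  simp only [unitCut, indicator_apply, smul_eq_mul, mul_ite, mul_zero]

theorem mellinConvergent_unitCut_iff {f : ℝ → ℝ} :
    MellinConvergent (unitCut f) z ↔
      IntervalIntegrable (fun v : ℝ ↦ (v : ℂ) ^ (z - 1) * f v) volume 0 1 := by
  rw [MellinConvergent, cpow_smul_unitCut, integrableOn_indicator_iff measurableSet_Ioo,
    inter_eq_left.2 Ioo_subset_Ioi_self, intervalIntegrable_iff_integrableOn_Ioo_of_le zero_le_one]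

theorem mellin_unitCut (f : ℝ → ℝ) (z : ℂ) :
    mellin (unitCut f) z = ∫ v : ℝ in 0..1, (v : ℂ) ^ (z - 1) * f v := by
  rw [mellin, cpow_smul_unitCut, setIntegral_indicator measurableSet_Ioo,
    inter_eq_right.2 Ioo_subset_Ioi_self, intervalIntegral.integral_of_le zero_le_one,
    integral_Ioc_eq_integral_Ioo]

theorem eqOn_cpow_mul_ofReal (f : ℝ → ℝ) (x : ℝ) :
    EqOn (fun v : ℝ ↦ (v : ℂ) ^ ((x : ℂ) - 1) * f v)
      (fun v ↦ ((f v * v ^ (x - 1) : ℝ) : ℂ)) (Ioo 0 1) := by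
  intro v hv
  simp only [Complex.ofReal_mul, Complex.ofReal_cpow hv.1.le, Complex.ofReal_sub,
    Complex.ofReal_one, mul_comm]

theorem mellin_unitCut_ofReal (f : ℝ → ℝ) (x : ℝ) :
    mellin (unitCut f) x = ((∫ v in 0..1, f v * v ^ (x - 1) : ℝ) : ℂ) := by
  rw [mellin_unitCut,
    intervalIntegral.integral_congr_Ioo_of_le zero_le_one (eqOn_cpow_mul_ofReal f x),
    intervalIntegral.integral_ofReal]

theorem intervalIntegrable_mul_rpow_of_mellinConvergent {f : ℝ → ℝ}
    (h : MellinConvergent (unitCut f) x) :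
    IntervalIntegrable (fun v ↦ f v * v ^ (x - 1)) volume 0 1 := by
  rw [mellinConvergent_unitCut_iff, intervalIntegrable_iff_integrableOn_Ioo_of_le zero_le_one,
    integrableOn_congr_fun (eqOn_cpow_mul_ofReal f x) measurableSet_Ioo] at h
  exact (intervalIntegrable_iff_integrableOn_Ioo_of_le zero_le_one).2 h.re

theorem intervalIntegrable_one_sub_rpow (hp : -1 < p) :
    IntervalIntegrable (fun v : ℝ ↦ (1 - v) ^ p) volume 0 1 := by
  simpa using (intervalIntegral.intervalIntegrable_rpow' (a := 1) (b := 0) hp).comp_sub_left 1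

theorem defectProd_eq {v : ℝ} (hv : v < 1) :
    defectProd β γ v = 1 - (1 - v) ^ β - (1 - v) ^ γ + (1 - v) ^ (β + γ) := by
  rw [defectProd, Real.rpow_add (sub_pos.2 hv)]
  ring

theorem isBigO_one_sub_rpow_sub_one_sub_rpow (p q : ℝ) :
    (fun v : ℝ ↦ (1 - v) ^ p - (1 - v) ^ q) =O[𝓝 0] fun v ↦ v := by
  have hdiff (r : ℝ) : DifferentiableAt ℝ (fun v : ℝ ↦ (1 - v) ^ r) 0 :=
    .rpow_const (by fun_prop) (.inl (by norm_num))
  simpa using ((hdiff p).sub (hdiff q)).isBigO_sub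

theorem isBigO_defectProd (β γ : ℝ) : defectProd β γ =O[𝓝 0] fun v ↦ v ^ 2 := by
  refine ((isBigO_one_sub_rpow_sub_one_sub_rpow 0 β).mul
    (isBigO_one_sub_rpow_sub_one_sub_rpow 0 γ)).congr (fun v ↦ ?_) fun v ↦ (sq v).symm
  simp only [Real.rpow_zero, defectProd]

theorem isBigO_unitCut (f : ℝ → ℝ) (l : Filter ℝ) : unitCut f =O[l] f :=
  isBigO_of_le _ fun _ ↦ (norm_indicator_le_norm_self _ _).trans_eq (Complex.norm_real _)

theorem isBigO_unitCut_defectProd (β γ : ℝ) :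
    unitCut (defectProd β γ) =O[𝓝[>] 0] fun v ↦ v ^ (-(-2) : ℝ) := by
  simpa using (isBigO_unitCut _ _).trans ((isBigO_defectProd β γ).mono nhdsWithin_le_nhds)

theorem isBigO_unitCut_atTop (f : ℝ → ℝ) (x : ℝ) :
    unitCut f =O[atTop] fun v ↦ v ^ (-x) := by
  refine (isBigO_zero _ _).congr' ?_ .rfl
  filter_upwards [eventually_ge_atTop 1] with v hv
  exact (indicator_of_notMem (fun h ↦ h.2.not_ge hv) _).symm

theorem locallyIntegrableOn_unitCut {f : ℝ → ℝ} (hf : IntervalIntegrable f volume 0 1) :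
    LocallyIntegrableOn (unitCut f) (Ioi 0) := by
  have hcut : Integrable (unitCut f) := (integrable_indicator_iff measurableSet_Ioo).2
    ((intervalIntegrable_iff_integrableOn_Ioo_of_le zero_le_one).1 hf).ofReal
  exact hcut.locallyIntegrable.locallyIntegrableOn _

theorem intervalIntegrable_defectProd (hβ : -1 < β) (hγ : -1 < γ) (hβγ : -1 < β + γ) :
    IntervalIntegrable (defectProd β γ) volume 0 1 := by
  have hsum := ((intervalIntegrable_const (c := (1 : ℝ))).sub
    (intervalIntegrable_one_sub_rpow hβ)).sub (intervalIntegrable_one_sub_rpow hγ) |>.add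
    (intervalIntegrable_one_sub_rpow hβγ)
  refine hsum.congr_uIoo fun v hv ↦ ?_
  rw [uIoo_of_le zero_le_one] at hv
  exact (defectProd_eq hv.2).symm

theorem mellinConvergent_defectProd (hβ : -1 < β) (hγ : -1 < γ) (hβγ : -1 < β + γ)
    (hz : -2 < z.re) : MellinConvergent (unitCut (defectProd β γ)) z :=
  mellinConvergent_of_isBigO_rpow
    (locallyIntegrableOn_unitCut (intervalIntegrable_defectProd hβ hγ hβγ))
    (isBigO_unitCut_atTop _ (z.re + 1)) (lt_add_one _)
    (isBigO_unitCut_defectProd β γ) hz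

theorem differentiableAt_mellin_defectProd (hβ : -1 < β) (hγ : -1 < γ) (hβγ : -1 < β + γ)
    (hz : -2 < z.re) : DifferentiableAt ℂ (mellin (unitCut (defectProd β γ))) z :=
  mellin_differentiableAt_of_isBigO_rpow
    (locallyIntegrableOn_unitCut (intervalIntegrable_defectProd hβ hγ hβγ))
    (isBigO_unitCut_atTop _ (z.re + 1)) (lt_add_one _)
    (isBigO_unitCut_defectProd β γ) hz

theorem intervalIntegrable_defectProd_mul_rpow (hβ : -1 < β) (hγ : -1 < γ) (hβγ : -1 < β + γ)
    (hx : -2 < x) : IntervalIntegrable (fun v ↦ defectProd β γ v * v ^ (x - 1)) volume 0 1 :=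
  intervalIntegrable_mul_rpow_of_mellinConvergent
    (mellinConvergent_defectProd hβ hγ hβγ (by simpa using hx))

theorem hasMellin_one_sub_rpow (hp : -1 < p) (hz : 0 < z.re) :
    HasMellin (unitCut fun v ↦ (1 - v) ^ p) z (Complex.betaIntegral z (p + 1)) := by
  have hcongr : EqOn (fun v : ℝ ↦ (v : ℂ) ^ (z - 1) * (1 - v) ^ ((p : ℂ) + 1 - 1))
      (fun v ↦ (v : ℂ) ^ (z - 1) * ((1 - v) ^ p : ℝ)) (Ioo 0 1) := by
    intro v hv
    simp only [add_sub_cancel_right, Complex.ofReal_cpow (sub_pos.2 hv.2).le, Complex.ofReal_sub,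
      Complex.ofReal_one]
  have hconv := Complex.betaIntegral_convergent (v := p + 1) hz (by simpa using by linarith)
  refine ⟨mellinConvergent_unitCut_iff.2 (hconv.congr_uIoo ?_), ?_⟩
  · rwa [uIoo_of_le zero_le_one]
  · rw [mellin_unitCut, Complex.betaIntegral,
      intervalIntegral.integral_congr_Ioo_of_le zero_le_one hcongr]

theorem betaIntegral_mul_inv_Gamma {p : ℂ} (hp : -1 < p.re) (hz : 0 < z.re) :
    Complex.betaIntegral z (p + 1) * (Complex.Gamma z)⁻¹ = betaDivGamma p z := by
  have hp' : 0 < (p + 1).re := by simpa using by linarith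
  have hΓ := Complex.Gamma_mul_Gamma_eq_betaIntegral hz hp'
  have hz0 := Complex.Gamma_ne_zero_of_re_pos hz
  have hsum0 : Complex.Gamma (p + 1 + z) ≠ 0 :=
    Complex.Gamma_ne_zero_of_re_pos (by rw [Complex.add_re]; exact add_pos hp' hz)
  rw [add_comm z] at hΓ
  rw [betaDivGamma]
  field_simp
  linear_combination -hΓ

theorem differentiable_betaDivGamma (p : ℂ) : Differentiable ℂ (betaDivGamma p) :=
  (Complex.differentiable_one_div_Gamma.comp (differentiable_id.const_add (p + 1))).const_mul _

theorem mellin_defectProd_of_re_pos (hβ : -1 < β) (hγ : -1 < γ) (hβγ : -1 < β + γ)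
    (hz : 0 < z.re) :
    mellin (unitCut (defectProd β γ)) z =
      Complex.betaIntegral z ((0 : ℝ) + 1) - Complex.betaIntegral z (β + 1)
        - Complex.betaIntegral z (γ + 1) + Complex.betaIntegral z ((β + γ : ℝ) + 1) := by
  have h0 := hasMellin_one_sub_rpow neg_one_lt_zero hz
  have h1 := hasMellin_one_sub_rpow hβ hz
  have h2 := hasMellin_one_sub_rpow hγ hz
  have h3 := hasMellin_one_sub_rpow hβγ hz
  have h01 := hasMellin_sub h0.1 h1.1
  have h012 := hasMellin_sub h01.1 h2.1
  have hsum : unitCut (defectProd β γ) = fun v ↦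
      unitCut (fun v ↦ (1 - v) ^ (0 : ℝ)) v - unitCut (fun v ↦ (1 - v) ^ β) v
        - unitCut (fun v ↦ (1 - v) ^ γ) v + unitCut (fun v ↦ (1 - v) ^ (β + γ)) v := by
    ext v
    by_cases hv : v ∈ Ioo (0 : ℝ) 1
    · simp [unitCut, hv, defectProd_eq hv.2]
    · simp [unitCut, hv]
  rw [hsum, (hasMellin_add h012.1 h3.1).2, h012.2, h01.2, h0.2, h1.2, h2.2, h3.2]

theorem mellin_defectProd_mul_inv_Gamma (hβ : -1 < β) (hγ : -1 < γ) (hβγ : -1 < β + γ)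
    (hz : -2 < z.re) :
    mellin (unitCut (defectProd β γ)) z * (Complex.Gamma z)⁻¹ =
      betaDivGamma (0 : ℝ) z - betaDivGamma β z - betaDivGamma γ z
        + betaDivGamma (β + γ : ℝ) z := by
  have hopen (c : ℝ) : IsOpen {z : ℂ | c < z.re} := isOpen_lt continuous_const Complex.continuous_re
  have hleft : AnalyticOnNhd ℂ
      (fun z ↦ mellin (unitCut (defectProd β γ)) z * (Complex.Gamma z)⁻¹) {z | -2 < z.re} :=
    DifferentiableOn.analyticOnNhd (fun w hw ↦
      ((differentiableAt_mellin_defectProd hβ hγ hβγ hw).mul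
        (Complex.differentiable_one_div_Gamma w)).differentiableWithinAt) (hopen _)
  have hright : AnalyticOnNhd ℂ (fun z ↦ betaDivGamma (0 : ℝ) z - betaDivGamma β z
      - betaDivGamma γ z + betaDivGamma (β + γ : ℝ) z) {z | -2 < z.re} :=
    ((((differentiable_betaDivGamma _).sub (differentiable_betaDivGamma _)).sub
      (differentiable_betaDivGamma _)).add
      (differentiable_betaDivGamma _)).differentiableOn.analyticOnNhd (hopen _)
  refine hleft.eqOn_of_preconnected_of_eventuallyEq hright
    (convex_halfSpace_re_gt (-2)).isPreconnected (z₀ := 1) (by norm_num) ?_ hz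
  filter_upwards [(hopen 0).mem_nhds (by norm_num : (1 : ℂ) ∈ {z : ℂ | 0 < z.re})] with w hw
  rw [mellin_defectProd_of_re_pos hβ hγ hβγ hw, add_mul, sub_mul, sub_mul,
    betaIntegral_mul_inv_Gamma (by norm_num) hw, betaIntegral_mul_inv_Gamma hβ hw,
    betaIntegral_mul_inv_Gamma hγ hw, betaIntegral_mul_inv_Gamma hβγ hw]

theorem betaDivGamma_ofReal (p x : ℝ) :
    betaDivGamma p x = (Real.Gamma (p + 1) * (Real.Gamma (p + 1 + x))⁻¹ : ℝ) := by
  rw [betaDivGamma]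
  norm_cast
  simp only [Complex.Gamma_ofReal, Complex.ofReal_mul, Complex.ofReal_inv]

theorem integral_defectProd_mul_rpow_mul_inv_Gamma (hβ : -1 < β) (hγ : -1 < γ)
    (hβγ : -1 < β + γ) (hx : -2 < x) :
    (∫ v in 0..1, defectProd β γ v * v ^ (x - 1)) * (Real.Gamma x)⁻¹ =
      (Real.Gamma (1 + x))⁻¹ - Real.Gamma (β + 1) * (Real.Gamma (β + 1 + x))⁻¹
        - Real.Gamma (γ + 1) * (Real.Gamma (γ + 1 + x))⁻¹
        + Real.Gamma (β + γ + 1) * (Real.Gamma (β + γ + 1 + x))⁻¹ := by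
  have h := mellin_defectProd_mul_inv_Gamma hβ hγ hβγ (z := x) (by simpa using hx)
  rw [mellin_unitCut_ofReal, Complex.Gamma_ofReal] at h
  simp only [betaDivGamma_ofReal, zero_add, Real.Gamma_one, one_mul] at h
  exact_mod_cast h

end MellinContinuation

section PrincipalValueConstant

open Topology

variable {p q r s β a a₁ a₂ v w x : ℝ}

/-- The value of the principal value integral of `(1 - (1 + y)₊ ^ β) / |y| ^ (1 + a)`, as an
absolutely convergent integral over `(0, 1)`. -/
def pvValue (β a : ℝ) : ℝ :=
  1 / a + ∫ v in 0..1, defectProd β (a - 1 - β) v * v ^ (-a - 1)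

theorem inv_Gamma_eq_of_lt_one (hx : x < 1) :
    (Real.Gamma x)⁻¹ = Real.Gamma (1 - x) * Real.sin (π * x) / π := by
  have hreflection := congrArg (·⁻¹) (Real.Gamma_mul_Gamma_one_sub x)
  simp only [mul_inv, inv_div] at hreflection
  have hΓ : Real.Gamma (1 - x) ≠ 0 := (Real.Gamma_pos_of_pos (sub_pos.2 hx)).ne'
  rw [mul_div_assoc, ← hreflection, mul_left_comm, mul_inv_cancel₀ hΓ, mul_one]

theorem c1s_mul_cos (hs : -(1 / 2) < s) :
    c1s s * Real.cos (π * s) = s * (Real.Gamma (1 - 2 * s))⁻¹ := by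
  have hreflection := inv_Gamma_eq_of_lt_one (x := 1 / 2 - s) (by linarith)
  rw [show 1 - (1 / 2 - s) = 1 / 2 + s by ring, show π * (1 / 2 - s) = π / 2 - π * s by ring,
    Real.sin_pi_div_two_sub] at hreflection
  have hduplication :
      (Real.Gamma (1 / 2 - s))⁻¹ * (Real.Gamma (1 - s))⁻¹ * (4 ^ s * √π) =
        (Real.Gamma (1 - 2 * s))⁻¹ := by
    have h := Real.Gamma_mul_Gamma_add_half (1 / 2 - s)
    rw [show 1 / 2 - s + 1 / 2 = 1 - s by ring, show 2 * (1 / 2 - s) = 1 - 2 * s by ring,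
      sub_sub_cancel, Real.rpow_mul (by norm_num), show (2 : ℝ) ^ (2 : ℝ) = 4 by norm_num,
      mul_assoc] at h
    have hne : 4 ^ s * √π ≠ 0 := by positivity
    rw [← mul_inv, h, mul_inv, inv_mul_cancel_right₀ hne]
  rw [← hduplication, hreflection, c1s, ← Real.sqrt_eq_rpow]
  field_simp
  rw [Real.sq_sqrt pi_pos.le]

theorem mul_pvValue_mul_inv_Gamma (ha0 : 0 < a) (ha2 : a < 2) (hβ : -1 < β) (hβa : β < a) :
    a * pvValue β a * (Real.Gamma (1 - a))⁻¹ =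
      Real.Gamma (β + 1) * (Real.Gamma (β + 1 - a))⁻¹
        + Real.Gamma (a - β) * (Real.Gamma (-β))⁻¹ := by
  have hγ : -1 < a - 1 - β := by linarith
  have hmellin := integral_defectProd_mul_rpow_mul_inv_Gamma hβ hγ (by linarith)
    (neg_lt_neg ha2)
  have hrec : (Real.Gamma (-a))⁻¹ = -a * (Real.Gamma (1 - a))⁻¹ := by
    have hstep := Real.Gamma_add_one (neg_ne_zero.2 ha0.ne')
    rw [neg_add_eq_sub] at hstep
    rw [hstep, mul_inv, mul_inv_cancel_left₀ (neg_ne_zero.2 ha0.ne')]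
  -- The last term of `hmellin` carries `(Γ 0)⁻¹`; its junk value `0` is the true zero of `1 / Γ`.
  have hzero : β + (a - 1 - β) + 1 + -a = 0 := by ring
  rw [hzero, hrec, Real.Gamma_zero, inv_zero, mul_zero, add_zero, ← sub_eq_add_neg,
    ← sub_eq_add_neg, show a - 1 - β + 1 = a - β by ring, show a - β + -a = -β by ring] at hmellin
  have hsplit : a * pvValue β a =
      1 + a * ∫ v in 0..1, defectProd β (a - 1 - β) v * v ^ (-a - 1) := by
    rw [pvValue, mul_add, mul_one_div_cancel ha0.ne']
  rw [hsplit]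
  linear_combination -hmellin

theorem cos_mul_c1s_mul_pvValue (hs0 : 0 < s) (hs1 : s < 1) (hβ : -1 < β) (hβs : β < 2 * s) :
    Real.cos (π * s) * (c1s s * pvValue β (2 * s)) =
      Real.cos (π * s) *
        (Real.Gamma (β + 1) * Real.Gamma (2 * s - β) * Real.sin (π * (s - β)) / π) := by
  have hpv := mul_pvValue_mul_inv_Gamma (a := 2 * s) (by linarith) (by linarith) hβ hβs
  have hsin : Real.sin (π * (β + 1 - 2 * s)) + Real.sin (π * -β) =
      2 * Real.sin (π * (s - β)) * Real.cos (π * s) := by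
    rw [show π * (β + 1 - 2 * s) = π - (π * (s - β) + π * s) by ring, Real.sin_pi_sub,
      show π * -β = π * (s - β) - π * s by ring, Real.sin_add, Real.sin_sub]
    ring
  rw [inv_Gamma_eq_of_lt_one (x := β + 1 - 2 * s) (by linarith),
    inv_Gamma_eq_of_lt_one (x := -β) (by linarith), sub_neg_eq_add, add_comm 1 β,
    show 1 - (β + 1 - 2 * s) = 2 * s - β by ring] at hpv
  linear_combination pvValue β (2 * s) * c1s_mul_cos (s := s) (by linarith) + hpv / 2
    + Real.Gamma (β + 1) * Real.Gamma (2 * s - β) / (2 * π) * hsin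

theorem abs_one_sub_rpow_le (hw0 : 0 < w) (hw1 : w ≤ 1) (hpq : p ≤ q) (hqr : q ≤ r) :
    |1 - w ^ q| ≤ |1 - w ^ p| + |1 - w ^ r| := by
  have hmax := abs_le_max_abs_abs
    (sub_le_sub_left (Real.rpow_le_rpow_of_exponent_ge hw0 hw1 hpq) 1)
    (sub_le_sub_left (Real.rpow_le_rpow_of_exponent_ge hw0 hw1 hqr) 1)
  exact hmax.trans (max_le_add_of_nonneg (abs_nonneg _) (abs_nonneg _))

/- The powers of `v` and `1 - v` are monotone in the exponent, so two fixed exponents dominate the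
whole range `[a₁, a₂]`. -/
theorem abs_defectProd_mul_rpow_le (hv : v ∈ Ioo (0 : ℝ) 1) (ha₁ : a₁ ≤ a) (ha₂ : a ≤ a₂) :
    |defectProd β (a - 1 - β) v * v ^ (-a - 1)| ≤
      |defectProd β (a₁ - 1 - β) v * v ^ (-a₂ - 1)|
        + |defectProd β (a₂ - 1 - β) v * v ^ (-a₂ - 1)| := by
  have hγ := abs_one_sub_rpow_le (sub_pos.2 hv.2) (sub_le_self 1 hv.1.le)
    (p := a₁ - 1 - β) (q := a - 1 - β) (r := a₂ - 1 - β) (by linarith) (by linarith)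
  have hpow : v ^ (-a - 1) ≤ v ^ (-a₂ - 1) :=
    Real.rpow_le_rpow_of_exponent_ge hv.1 hv.2.le (by linarith)
  simp only [defectProd, abs_mul, abs_of_pos (Real.rpow_pos_of_pos hv.1 _)]
  rw [← add_mul, ← mul_add]
  gcongr
  exact (Real.rpow_pos_of_pos hv.1 _).le

theorem continuousAt_pvValue (hβ : -1 < β) (ha0 : 0 < a) (ha2 : a < 2) (hβa : β < a) :
    ContinuousAt (pvValue β) a := by
  obtain ⟨a₁, hmax, ha₁⟩ := exists_between (max_lt ha0 hβa)
  obtain ⟨a₂, ha₂, ha₂2⟩ := exists_between ha2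
  obtain ⟨ha₁0, hβa₁⟩ := max_lt_iff.1 hmax
  have hint {c d : ℝ} (hc0 : 0 < c) (hβc : β < c) (hd : d < 2) :
      IntegrableOn (fun v ↦ defectProd β (c - 1 - β) v * v ^ (-d - 1)) (Ioo 0 1) :=
    (intervalIntegrable_iff_integrableOn_Ioo_of_le zero_le_one).1
      (intervalIntegrable_defectProd_mul_rpow hβ (by linarith) (by linarith) (by linarith))
  have hnear : ∀ᶠ c in 𝓝 a, c ∈ Ioo a₁ a₂ := Ioo_mem_nhds ha₁ ha₂
  refine (continuousAt_const.div continuousAt_id ha0.ne').add ?_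
  simp only [intervalIntegral.integral_of_le zero_le_one, integral_Ioc_eq_integral_Ioo]
  refine continuousAt_of_dominated ?_ ?_
    ((hint ha₁0 hβa₁ ha₂2).abs.add (hint (ha0.trans ha₂) (hβa.trans ha₂) ha₂2).abs) ?_
  · filter_upwards [hnear] with c hc
    exact (hint (ha₁0.trans hc.1) (hβa₁.trans hc.1) (hc.2.trans ha₂2)).aestronglyMeasurable
  · filter_upwards [hnear] with c hc
    exact (ae_restrict_iff' measurableSet_Ioo).2
      (.of_forall fun v hv ↦ abs_defectProd_mul_rpow_le hv hc.1.le hc.2.le)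
  · refine (ae_restrict_iff' measurableSet_Ioo).2 (.of_forall fun v hv ↦ ?_)
    have hv0 : v ≠ 0 := hv.1.ne'
    have hv1 : 1 - v ≠ 0 := (sub_pos.2 hv.2).ne'
    unfold defectProd
    fun_prop (disch := assumption)

theorem continuousAt_Gamma_of_pos (hx : 0 < x) : ContinuousAt Real.Gamma x :=
  (Real.differentiableOn_Gamma_Ioi.differentiableAt (Ioi_mem_nhds hx)).continuousAt

theorem continuousAt_c1s (hs0 : -(1 / 2) < s) (hs1 : s < 1) : ContinuousAt c1s s := by
  have hnum : ContinuousAt (fun t ↦ Real.Gamma (1 / 2 + t)) s :=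
    (continuousAt_Gamma_of_pos (by linarith)).comp' (by fun_prop)
  have hden : ContinuousAt (fun t ↦ Real.Gamma (1 - t)) s :=
    (continuousAt_Gamma_of_pos (by linarith)).comp' (by fun_prop)
  have hden0 : Real.Gamma (1 - s) ≠ 0 := (Real.Gamma_pos_of_pos (by linarith)).ne'
  unfold c1s
  exact ((continuousAt_id.mul (by fun_prop (disch := norm_num))).mul hnum).div
    (continuousAt_const.mul hden) (mul_ne_zero (by positivity) hden0)

theorem eventually_cos_pi_mul_ne_zero (s : ℝ) : ∀ᶠ t in 𝓝[≠] s, Real.cos (π * t) ≠ 0 := by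
  have hderiv : HasDerivAt (fun t ↦ Real.cos (π * t)) (-Real.sin (π * s) * (π * 1)) s :=
    ((hasDerivAt_id s).const_mul π).cos
  by_cases hcos : Real.cos (π * s) = 0
  · have hsin : Real.sin (π * s) ≠ 0 := fun h ↦ by
      simpa [h, hcos] using Real.sin_sq_add_cos_sq (π * s)
    exact hderiv.eventually_ne (by simp [hsin, pi_ne_zero])
  · exact (hderiv.continuousAt.eventually_ne hcos).filter_mono nhdsWithin_le_nhds

theorem c1s_mul_pvValue (hs0 : 0 < s) (hs1 : s < 1) (hβ : -1 < β) (hβs : β < 2 * s) :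
    c1s s * pvValue β (2 * s) =
      Real.Gamma (β + 1) * Real.Gamma (2 * s - β) * Real.sin (π * (s - β)) / π := by
  have hpv : ContinuousAt (fun t ↦ pvValue β (2 * t)) s :=
    (continuousAt_pvValue hβ (by linarith) (by linarith) hβs).comp' (by fun_prop)
  have hΓ : ContinuousAt (fun t ↦ Real.Gamma (2 * t - β)) s :=
    (continuousAt_Gamma_of_pos (x := 2 * s - β) (sub_pos.2 hβs)).comp' (f := fun t ↦ 2 * t - β)
      (by fun_prop)
  have hleft : ContinuousAt (fun t ↦ c1s t * pvValue β (2 * t)) s :=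
    (continuousAt_c1s (by linarith) hs1).mul hpv
  have hright : ContinuousAt (fun t ↦ Real.Gamma (β + 1) * Real.Gamma (2 * t - β) *
      Real.sin (π * (t - β)) / π) s := by fun_prop
  refine tendsto_nhds_unique_of_eventuallyEq (hleft.mono_left nhdsWithin_le_nhds)
    (hright.mono_left nhdsWithin_le_nhds) (l := 𝓝[≠] s) ?_
  have hrange : ∀ᶠ t in 𝓝[≠] s, t ∈ Ioo (max 0 (β / 2)) 1 :=
    nhdsWithin_le_nhds (Ioo_mem_nhds (max_lt hs0 (by linarith)) hs1)
  filter_upwards [hrange, eventually_cos_pi_mul_ne_zero s] with t ht hcos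
  obtain ⟨ht0, hβt⟩ := max_lt_iff.1 ht.1
  exact mul_left_cancel₀ hcos (cos_mul_c1s_mul_pvValue ht0 ht.2 hβ (by linarith))

end PrincipalValueConstant

section PrincipalValueLimit

open Asymptotics Topology

variable {E : Type*} [NormedAddCommGroup E] [NormedSpace ℝ E] {β p a c v ε δ : ℝ}

/-- The integrand of the fractional Laplacian of `x ↦ (x₊) ^ β` at `x = 1`, with `a = 2 * s`. -/
def pvIntegrand (β a y : ℝ) : ℝ :=
  (1 - powPlus (1 + y) β) / |y| ^ (1 + a)

/-- The integrand over `y ∈ (-1, 0)`, in the variable `v = -y`. -/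
def leftFold (β a v : ℝ) : ℝ :=
  (1 - (1 - v) ^ β) * v ^ (-a - 1)

/-- The integrand over `y ∈ (0, ∞)`, in the variable `v = y / (1 + y)`. -/
def rightFold (β a v : ℝ) : ℝ :=
  ((1 - v) ^ (a - 1) - (1 - v) ^ (a - 1 - β)) * v ^ (-a - 1)

theorem leftFold_add_rightFold (hv : v < 1) :
    leftFold β a v + rightFold β a v = defectProd β (a - 1 - β) v * v ^ (-a - 1) := by
  rw [leftFold, rightFold, defectProd_eq hv, add_sub_cancel]
  ring

theorem intervalIntegrable_one_sub_rpow_mul_rpow (hp : -1 < p) (c : ℝ) (hδ0 : 0 < δ)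
    (hδ1 : δ < 1) : IntervalIntegrable (fun v : ℝ ↦ (1 - v) ^ p * v ^ c) volume δ 1 := by
  have hsub : uIcc δ 1 ⊆ uIcc 0 1 := by
    rw [uIcc_of_le hδ1.le, uIcc_of_le zero_le_one]
    exact Icc_subset_Icc_left hδ0.le
  refine ((intervalIntegrable_one_sub_rpow hp).mono_set hsub).mul_continuousOn fun v hv ↦ ?_
  rw [uIcc_of_le hδ1.le] at hv
  exact (Real.continuousAt_rpow_const _ _ (.inl (hδ0.trans_le hv.1).ne')).continuousWithinAt

theorem intervalIntegrable_leftFold (hβ : -1 < β) (hδ0 : 0 < δ) (hδ1 : δ < 1) :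
    IntervalIntegrable (leftFold β a) volume δ 1 := by
  refine ((intervalIntegrable_one_sub_rpow_mul_rpow neg_one_lt_zero (-a - 1) hδ0 hδ1).sub
    (intervalIntegrable_one_sub_rpow_mul_rpow hβ (-a - 1) hδ0 hδ1)).congr fun v _ ↦ ?_
  simp only [Real.rpow_zero, leftFold, sub_mul]

theorem intervalIntegrable_rightFold (ha : 0 < a) (hβa : β < a) (hδ0 : 0 < δ) (hδ1 : δ < 1) :
    IntervalIntegrable (rightFold β a) volume δ 1 := by
  have h₁ := intervalIntegrable_one_sub_rpow_mul_rpow (p := a - 1) (by linarith) (-a - 1) hδ0 hδ1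
  have h₂ := intervalIntegrable_one_sub_rpow_mul_rpow (p := a - 1 - β) (by linarith) (-a - 1)
    hδ0 hδ1
  refine (h₁.sub h₂).congr fun v _ ↦ ?_
  simp only [rightFold, sub_mul]

theorem eqOn_leftFold_pvIntegrand_neg :
    EqOn (leftFold β a) (fun v ↦ pvIntegrand β a (-v)) (Ioo 0 1) := by
  intro v hv
  have hv1 : 0 < 1 + -v := by linarith [hv.2]
  simp only [leftFold, pvIntegrand, powPlus, hv1, if_true, abs_neg, abs_of_pos hv.1]
  rw [div_eq_mul_inv, ← Real.rpow_neg hv.1.le, ← sub_eq_add_neg, show -(1 + a) = -a - 1 by ring]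

theorem eqOn_rpow_pvIntegrand_neg :
    EqOn (fun v : ℝ ↦ v ^ (-a - 1)) (fun v ↦ pvIntegrand β a (-v)) (Ioi 1) := by
  intro v hv
  have hv0 : 0 < v := zero_lt_one.trans hv
  have hv1 : ¬ 0 < 1 + -v := by linarith [mem_Ioi.1 hv]
  simp only [pvIntegrand, powPlus, hv1, if_false, sub_zero, abs_neg, abs_of_pos hv0]
  rw [one_div, ← Real.rpow_neg hv0.le]
  congr 1
  ring

theorem integral_Ioi_one_rpow_neg_sub_one (ha : 0 < a) :
    ∫ v in Ioi (1 : ℝ), v ^ (-a - 1) = 1 / a := by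
  rw [integral_Ioi_rpow_of_lt (by linarith) one_pos, Real.one_rpow, sub_add_cancel, neg_div_neg_eq]

theorem integrableOn_Ioc_pvIntegrand_neg (hβ : -1 < β) (hε0 : 0 < ε) (hε1 : ε < 1) :
    IntegrableOn (fun v ↦ pvIntegrand β a (-v)) (Ioc ε 1) := by
  rw [integrableOn_Ioc_iff_integrableOn_Ioo, ← integrableOn_congr_fun
      (eqOn_leftFold_pvIntegrand_neg.mono (Ioo_subset_Ioo_left hε0.le)) measurableSet_Ioo,
    ← intervalIntegrable_iff_integrableOn_Ioo_of_le hε1.le]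
  exact intervalIntegrable_leftFold hβ hε0 hε1

theorem integrableOn_Ioi_pvIntegrand_neg (ha : 0 < a) :
    IntegrableOn (fun v ↦ pvIntegrand β a (-v)) (Ioi 1) :=
  (integrableOn_congr_fun eqOn_rpow_pvIntegrand_neg measurableSet_Ioi).1
    (integrableOn_Ioi_rpow_of_lt (by linarith) one_pos)

theorem integrableOn_Iio_pvIntegrand (ha : 0 < a) (hβ : -1 < β) (hε0 : 0 < ε) (hε1 : ε < 1) :
    IntegrableOn (pvIntegrand β a) (Iio (-ε)) := by
  have h := (integrableOn_Ioc_pvIntegrand_neg (a := a) hβ hε0 hε1).union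
    (integrableOn_Ioi_pvIntegrand_neg (β := β) ha)
  rw [Ioc_union_Ioi_eq_Ioi hε1.le] at h
  simpa using h.comp_neg

theorem integral_Iio_pvIntegrand (ha : 0 < a) (hβ : -1 < β) (hε0 : 0 < ε) (hε1 : ε < 1) :
    ∫ y in Iio (-ε), pvIntegrand β a y = 1 / a + ∫ v in ε..1, leftFold β a v := by
  calc ∫ y in Iio (-ε), pvIntegrand β a y
      = ∫ v in Ioi ε, pvIntegrand β a (-v) := by
        rw [← integral_Iic_eq_integral_Iio, integral_comp_neg_Ioi]
    _ = (∫ v in ε..1, pvIntegrand β a (-v)) + ∫ v in Ioi 1, pvIntegrand β a (-v) := by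
        rw [← Ioc_union_Ioi_eq_Ioi hε1.le, setIntegral_union (Ioc_disjoint_Ioi le_rfl)
          measurableSet_Ioi (integrableOn_Ioc_pvIntegrand_neg hβ hε0 hε1)
          (integrableOn_Ioi_pvIntegrand_neg ha), intervalIntegral.integral_of_le hε1.le]
    _ = 1 / a + ∫ v in ε..1, leftFold β a v := by
        rw [← setIntegral_congr_fun measurableSet_Ioi eqOn_rpow_pvIntegrand_neg,
          integral_Ioi_one_rpow_neg_sub_one ha, add_comm,
          ← intervalIntegral.integral_congr_Ioo_of_le hε1.le
            (eqOn_leftFold_pvIntegrand_neg.mono (Ioo_subset_Ioo_left hε0.le))]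

theorem image_div_one_sub_Ioo (hc : -1 < c) :
    (fun v : ℝ ↦ v / (1 - v)) '' Ioo (c / (1 + c)) 1 = Ioi c := by
  ext y
  constructor
  · rintro ⟨v, hv, rfl⟩
    have hcv := (div_lt_iff₀ (by linarith)).1 hv.1
    exact (lt_div_iff₀ (sub_pos.2 hv.2)).2 (by linarith)
  · intro (hy : c < y)
    have hy0 : 0 < 1 + y := by linarith
    refine ⟨y / (1 + y), ⟨?_, ?_⟩, ?_⟩
    · rw [div_lt_div_iff₀ (by linarith) hy0]
      linarith
    · rw [div_lt_one hy0]
      linarith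
    · field_simp
      ring

theorem hasDerivAt_div_one_sub (hv : v ≠ 1) :
    HasDerivAt (fun v : ℝ ↦ v / (1 - v)) (((1 - v) ^ 2)⁻¹) v := by
  refine ((hasDerivAt_id v).div ((hasDerivAt_id v).const_sub 1)
    (sub_ne_zero.2 hv.symm)).congr_deriv ?_
  simp only [id, one_mul, mul_neg, mul_one, sub_neg_eq_add, sub_add_cancel, one_div]

theorem injOn_div_one_sub : InjOn (fun v : ℝ ↦ v / (1 - v)) (Iio 1) := by
  intro v hv w hw hvw
  rw [div_eq_div_iff (sub_pos.2 hv).ne' (sub_pos.2 hw).ne'] at hvw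
  linarith

theorem integral_Ioi_comp_div_one_sub (hc : -1 < c) (g : ℝ → E) :
    ∫ y in Ioi c, g y = ∫ v in Ioo (c / (1 + c)) 1, |((1 - v) ^ 2)⁻¹| • g (v / (1 - v)) := by
  rw [← image_div_one_sub_Ioo hc]
  exact integral_image_eq_integral_abs_deriv_smul measurableSet_Ioo
    (fun v hv ↦ (hasDerivAt_div_one_sub hv.2.ne).hasDerivWithinAt)
    (injOn_div_one_sub.mono Ioo_subset_Iio_self) g

theorem integrableOn_Ioi_iff_comp_div_one_sub (hc : -1 < c) (g : ℝ → E) :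
    IntegrableOn g (Ioi c) ↔
      IntegrableOn (fun v ↦ |((1 - v) ^ 2)⁻¹| • g (v / (1 - v))) (Ioo (c / (1 + c)) 1) := by
  rw [← image_div_one_sub_Ioo hc]
  exact integrableOn_image_iff_integrableOn_abs_deriv_smul measurableSet_Ioo
    (fun v hv ↦ (hasDerivAt_div_one_sub hv.2.ne).hasDerivWithinAt)
    (injOn_div_one_sub.mono Ioo_subset_Iio_self) g

theorem eqOn_rightFold_pvIntegrand :
    EqOn (rightFold β a) (fun v ↦ |((1 - v) ^ 2)⁻¹| • pvIntegrand β a (v / (1 - v)))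
      (Ioo 0 1) := by
  intro v hv
  have hv1 : 0 < 1 - v := sub_pos.2 hv.2
  have hbase : 1 + v / (1 - v) = (1 - v)⁻¹ := by
    field_simp
    ring
  have hquot : 0 < v / (1 - v) := div_pos hv.1 hv1
  simp only [rightFold, pvIntegrand, powPlus, hbase, inv_pos.2 hv1, if_true, smul_eq_mul,
    abs_of_pos hquot, abs_of_pos (inv_pos.2 (pow_pos hv1 2))]
  rw [Real.inv_rpow hv1.le, Real.div_rpow hv.1.le hv1.le, Real.rpow_sub hv1 (a - 1) β,
    show -a - 1 = -(1 + a) by ring, Real.rpow_neg hv.1.le,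
    show 1 + a = (a - 1) + 2 by ring, Real.rpow_add hv1 (a - 1) 2, Real.rpow_two]
  field_simp

theorem div_one_add_mem_Ioo (hε : 0 < ε) : ε / (1 + ε) ∈ Ioo (0 : ℝ) 1 :=
  ⟨by positivity, (div_lt_one (by linarith)).2 (by linarith)⟩

theorem integrableOn_Ioi_pvIntegrand (ha : 0 < a) (hβa : β < a) (hε : 0 < ε) :
    IntegrableOn (pvIntegrand β a) (Ioi ε) := by
  obtain ⟨hδ0, hδ1⟩ := div_one_add_mem_Ioo hε
  rw [integrableOn_Ioi_iff_comp_div_one_sub (by linarith), ← integrableOn_congr_fun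
      (eqOn_rightFold_pvIntegrand.mono (Ioo_subset_Ioo_left hδ0.le)) measurableSet_Ioo,
    ← intervalIntegrable_iff_integrableOn_Ioo_of_le hδ1.le]
  exact intervalIntegrable_rightFold ha hβa hδ0 hδ1

theorem integral_Ioi_pvIntegrand (hε : 0 < ε) :
    ∫ y in Ioi ε, pvIntegrand β a y = ∫ v in (ε / (1 + ε))..1, rightFold β a v := by
  obtain ⟨hδ0, hδ1⟩ := div_one_add_mem_Ioo hε
  rw [integral_Ioi_comp_div_one_sub (by linarith), ← setIntegral_congr_fun measurableSet_Ioo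
      (eqOn_rightFold_pvIntegrand.mono (Ioo_subset_Ioo_left hδ0.le)),
    intervalIntegral.integral_of_le hδ1.le, integral_Ioc_eq_integral_Ioo]

theorem setOf_lt_abs_eq (ε : ℝ) : {y : ℝ | ε < |y|} = Iio (-ε) ∪ Ioi ε := by
  ext y
  simp only [mem_ofPred_eq, mem_union, mem_Iio, mem_Ioi, lt_abs, lt_neg, or_comm]

/- On the right half-line the cutoff `y > ε` becomes `v > ε / (1 + ε)` rather than `v > ε`; the
mismatch is the last summand. -/
theorem integral_lt_abs_pvIntegrand (ha : 0 < a) (hβ : -1 < β) (hβa : β < a) (hε0 : 0 < ε)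
    (hε1 : ε < 1) :
    ∫ y in {y : ℝ | ε < |y|}, pvIntegrand β a y =
      1 / a + (∫ v in ε..1, defectProd β (a - 1 - β) v * v ^ (-a - 1))
        + ∫ v in (ε / (1 + ε))..ε, rightFold β a v := by
  obtain ⟨hδ0, hδ1⟩ := div_one_add_mem_Ioo hε0
  have hleft := intervalIntegrable_leftFold (a := a) hβ hε0 hε1
  have hright := intervalIntegrable_rightFold ha hβa hε0 hε1
  have hgap : IntervalIntegrable (rightFold β a) volume (ε / (1 + ε)) ε :=
    (intervalIntegrable_rightFold ha hβa hδ0 hδ1).trans hright.symm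
  have hsum : ∫ v in ε..1, defectProd β (a - 1 - β) v * v ^ (-a - 1) =
      (∫ v in ε..1, leftFold β a v) + ∫ v in ε..1, rightFold β a v := by
    rw [← intervalIntegral.integral_add hleft hright]
    exact intervalIntegral.integral_congr_Ioo_of_le hε1.le
      fun v hv ↦ (leftFold_add_rightFold hv.2).symm
  have hdisjoint : Disjoint (Iio (-ε)) (Ioi ε) :=
    (Iio_disjoint_Ici le_rfl).mono_right (Ioi_subset_Ici (by linarith))
  rw [setOf_lt_abs_eq, setIntegral_union hdisjoint measurableSet_Ioi
      (integrableOn_Iio_pvIntegrand ha hβ hε0 hε1) (integrableOn_Ioi_pvIntegrand ha hβa hε0),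
    integral_Iio_pvIntegrand ha hβ hε0 hε1, integral_Ioi_pvIntegrand hε0,
    ← intervalIntegral.integral_add_adjacent_intervals hgap hright, hsum]
  ring

theorem tendsto_integral_nhdsGT_left {f : ℝ → E} {c d : ℝ} (hcd : c < d)
    (hf : IntervalIntegrable f volume c d) :
    Tendsto (fun x ↦ ∫ v in x..d, f v) (𝓝[>] c) (𝓝 (∫ v in c..d, f v)) := by
  rw [intervalIntegrable_iff_integrableOn_Icc_of_le hcd.le, ← uIcc_of_le hcd.le] at hf
  have hcont := intervalIntegral.continuousOn_primitive_interval_left hf c left_mem_uIcc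
  rw [uIcc_of_le hcd.le] at hcont
  rw [← nhdsWithin_Ioo_eq_nhdsGT hcd]
  exact hcont.mono_left (nhdsWithin_mono _ Ioo_subset_Icc_self)

theorem isBigO_rightFold (β a : ℝ) : rightFold β a =O[𝓝[>] 0] fun v ↦ v ^ (-a) := by
  refine (((isBigO_one_sub_rpow_sub_one_sub_rpow (a - 1) (a - 1 - β)).mono
    nhdsWithin_le_nhds).mul (isBigO_refl (fun v ↦ v ^ (-a - 1)) _)).congr' .rfl ?_
  filter_upwards [self_mem_nhdsWithin] with v hv
  rw [Real.rpow_sub_one (ne_of_gt hv), mul_div_cancel₀ _ (ne_of_gt hv)]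

theorem isBigO_integral_div_one_add {f : ℝ → E} (hf : f =O[𝓝[>] 0] fun v ↦ v ^ (-a))
    (ha : 0 ≤ a) :
    (fun ε ↦ ∫ v in (ε / (1 + ε))..ε, f v) =O[𝓝[>] 0] fun ε ↦ ε ^ (2 - a) := by
  obtain ⟨C, hC, hbound⟩ := hf.exists_pos
  obtain ⟨r, hr, hr'⟩ := (nhdsGT_basis (0 : ℝ)).eventually_iff.1 hbound.bound
  refine .of_bound (C * 2 ^ a) ?_
  filter_upwards [Ioo_mem_nhdsGT (lt_min hr one_pos)] with ε hε
  obtain ⟨hε0, hεr, hε1⟩ : 0 < ε ∧ ε < r ∧ ε < 1 := ⟨hε.1, lt_min_iff.1 hε.2⟩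
  have hhalf : ε / 2 ≤ ε / (1 + ε) := div_le_div_of_nonneg_left hε0.le (by linarith) (by linarith)
  have hle : ε / (1 + ε) ≤ ε := div_le_self hε0.le (by linarith)
  have hpoint : ∀ v ∈ uIoc (ε / (1 + ε)) ε, ‖f v‖ ≤ C * (ε / 2) ^ (-a) := by
    intro v hv
    rw [uIoc_of_le hle] at hv
    have hεv : ε / 2 ≤ v := hhalf.trans hv.1.le
    have hv0 : 0 < v := (half_pos hε0).trans_le hεv
    calc ‖f v‖ ≤ C * ‖v ^ (-a)‖ := hr' ⟨hv0, hv.2.trans_lt hεr⟩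
      _ = C * v ^ (-a) := by rw [Real.norm_of_nonneg (by positivity)]
      _ ≤ C * (ε / 2) ^ (-a) := mul_le_mul_of_nonneg_left
        (Real.rpow_le_rpow_of_nonpos (half_pos hε0) hεv (neg_nonpos.2 ha)) hC.le
  have hlength : |ε - ε / (1 + ε)| ≤ ε ^ 2 := by
    rw [abs_of_nonneg (sub_nonneg.2 hle), sub_le_iff_le_add, ← sub_le_iff_le_add',
      le_div_iff₀ (by linarith)]
    nlinarith [pow_pos hε0 3]
  calc ‖∫ v in (ε / (1 + ε))..ε, f v‖
      ≤ C * (ε / 2) ^ (-a) * |ε - ε / (1 + ε)| :=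
        intervalIntegral.norm_integral_le_of_norm_le_const hpoint
    _ ≤ C * (ε / 2) ^ (-a) * ε ^ 2 := by gcongr
    _ = C * 2 ^ a * ‖ε ^ (2 - a)‖ := by
        rw [Real.norm_of_nonneg (by positivity), Real.div_rpow hε0.le zero_le_two,
          Real.rpow_neg zero_le_two, sub_eq_add_neg, Real.rpow_add hε0, Real.rpow_two]
        field_simp

theorem tendsto_integral_rightFold_gap (β : ℝ) (ha0 : 0 ≤ a) (ha2 : a < 2) :
    Tendsto (fun ε ↦ ∫ v in (ε / (1 + ε))..ε, rightFold β a v) (𝓝[>] 0) (𝓝 0) := by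
  refine (isBigO_integral_div_one_add (isBigO_rightFold β a) ha0).trans_tendsto ?_
  have h := (Real.continuousAt_rpow_const 0 (2 - a) (.inr (by linarith))).tendsto
  rw [Real.zero_rpow (by linarith)] at h
  exact h.mono_left nhdsWithin_le_nhds

theorem tendsto_integral_pvIntegrand (ha0 : 0 < a) (ha2 : a < 2) (hβ : -1 < β) (hβa : β < a) :
    Tendsto (fun ε ↦ ∫ y in {y : ℝ | ε < |y|}, pvIntegrand β a y) (𝓝[>] 0)
      (𝓝 (pvValue β a)) := by
  have hint := intervalIntegrable_defectProd_mul_rpow (γ := a - 1 - β) (x := -a) hβ (by linarith)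
    (by linarith) (by linarith)
  have hlim := ((tendsto_integral_nhdsGT_left zero_lt_one hint).const_add (1 / a)).add
    (tendsto_integral_rightFold_gap β ha0.le ha2)
  rw [add_zero] at hlim
  refine hlim.congr' ?_
  filter_upwards [Ioo_mem_nhdsGT one_pos] with ε hε
  exact (integral_lt_abs_pvIntegrand ha0 hβ hβa hε.1 hε.2).symm

end PrincipalValueLimit

theorem Gamma_mul_sin_div_pi_eq {s β : ℝ} (hβs : β < 2 * s) (h : ∀ k : ℤ, β - 2 * s ≠ k) :
    Real.Gamma (β + 1) * Real.Gamma (2 * s - β) * Real.sin (π * (s - β)) / π =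
      Real.Gamma (β + 1) / Real.Gamma (β - 2 * s + 1) *
        (Real.sin (π * (β - s)) / Real.sin (π * (β - 2 * s))) := by
  have hsin : Real.sin (π * (β - 2 * s)) ≠ 0 := Real.sin_ne_zero_iff.2 fun k hk ↦
    h k (mul_left_cancel₀ pi_ne_zero (by rw [← hk, mul_comm]))
  rw [div_eq_mul_inv (Real.Gamma (β + 1)),
    inv_Gamma_eq_of_lt_one (x := β - 2 * s + 1) (by linarith),
    show 1 - (β - 2 * s + 1) = 2 * s - β by ring,
    show π * (β - 2 * s + 1) = π * (β - 2 * s) + π by ring, Real.sin_add_pi,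
    show π * (s - β) = -(π * (β - s)) by ring, Real.sin_neg]
  field_simp

theorem frac_laplacian_of_powers_general (s β : ℝ) (hs0 : 0 < s) (hs1 : s < 1) (hβ1 : -1 < β)
    (hβ2 : β < 2 * s) :
    ∃ L : ℝ,
      Tendsto (fun ε : ℝ ↦
          ∫ y in {y : ℝ | ε < |y|}, (1 - powPlus (1 + y) β) / |y| ^ (1 + 2 * s))
        (nhdsWithin 0 (Ioi 0)) (nhds L) ∧
      c1s s * L =
        Real.Gamma (β + 1) * Real.Gamma (2 * s - β) * Real.sin (π * (s - β)) / π :=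
  ⟨pvValue β (2 * s), tendsto_integral_pvIntegrand (by linarith) (by linarith) hβ1 hβ2,
    c1s_mul_pvValue hs0 hs1 hβ1 hβ2⟩

/-- **Lemma 2.4, fractional Laplacian of powers.**
For `s ∈ (0,1)` and `β ∈ (-1,2s)` with `β-s, β-2s ∉ ℤ`, the principal value
`p.v.∫_ℝ (1 - ((1+y)₊)^β)/|y|^{1+2s} dy` exists and
`c_{1,s} · p.v.∫ = Γ(β+1)/Γ(β-2s+1) · sin(π(β-s))/sin(π(β-2s))`, i.e. the one-dimensional
fractional Laplacian of `x ↦ (x₊)^β` at `x = 1` equals this constant. -/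
theorem frac_laplacian_of_powers
    (s β : ℝ) (hs0 : 0 < s) (hs1 : s < 1) (hβ1 : -1 < β) (hβ2 : β < 2*s)
    (h1 : ∀ k : ℤ, β - s ≠ (k : ℝ)) (h2 : ∀ k : ℤ, β - 2*s ≠ (k : ℝ)) :
    ∃ L : ℝ,
      Tendsto (fun ε : ℝ =>
          ∫ y in {y : ℝ | ε < |y|}, (1 - powPlus (1+y) β) / |y| ^ (1 + 2*s))
        (nhdsWithin 0 (Set.Ioi 0)) (nhds L) ∧
      c1s s * L
        = Real.Gamma (β+1) / Real.Gamma (β - 2*s + 1)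
            * (Real.sin (π*(β-s)) / Real.sin (π*(β-2*s))) := by
  simpa only [Gamma_mul_sin_div_pi_eq hβ2 h2] using
    frac_laplacian_of_powers_general s β hs0 hs1 hβ1 hβ2
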